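/- Let ℓ, m, n be positive integers with ℓ·m = n². Then τ(ℓ,m) ≤ τ(n,n): among all rectangular grid graphs with n² vertices, the square n×n grid has the largest number of spanning trees. -/

import Mathlib

/-- The rectangular grid graph `R_{ℓ,m}`: the box (Cartesian) product of the path
graphs on `ℓ` and `m` vertices. -/
def gridGraph (l m : ℕ) : SimpleGraph (Fin l × Fin m) :=
  (SimpleGraph.pathGraph l).boxProd (SimpleGraph.pathGraph m)

/-- `gridTau l m` is the number of spanning trees of the `l × m` rectangular grid graph,
i.e. the number of spanning subgraphs of `gridGraph l m` that are trees. -/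
noncomputable def gridTau (l m : ℕ) : ℕ :=
  Set.ncard {H : (gridGraph l m).Subgraph | H.IsSpanning ∧ H.coe.IsTree}

/-!
By Kirchhoff's theorem and the spectrum of the path, `gridTau l m` is the product of `λᵢ + μⱼ` over
the nonzero Laplacian eigenvalues of the two paths. Writing `1 + λᵢ / 2 = cosh θᵢ`, the inner
product over `j` is the Chebyshev value `sinh (m θᵢ) / sinh θᵢ`, so that
`gridTau l m = P l m / P l 1` with `P l x = ∏ i, 2 * sinh (x θᵢ)` defined for real `x`.

Let `l < n < m`. Since `log (2 sinh x) / x` is increasing, `m log (P m l) ≤ n log (P m n)`, and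
exchanging the two sides of the grid turns `P m n` into `P n m`. With `S = ∑ i, θᵢ` over the path on
`n` vertices, `log (P n m) ≤ m S`, whereas `log (P n n) ≥ n S + log (3 / 4)`. Together these
compare `m log (gridTau l m)` with `m log (gridTau n n)` up to the loss `m log (4 / 3)` and the gain
`(m - n) (log (P m 1) - log (P n 1))`. As `P k 1` grows by a factor of at least `√5` with every
step of `k`, the gain is at least `(m - n) ^ 2 log √5`. Finally `m ∣ n ^ 2` forces
`m ≤ (m - n) ^ 2`, and `√5 > 4 / 3`.
-/

open Finset Matrix

section SpanningTrees

variable {V : Type*}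

/-- The number of spanning trees of `G`. A spanning tree is encoded by its edges alone, as a tree
on the whole vertex type that is contained in `G`. -/
noncomputable def numSpanningTrees (G : SimpleGraph V) : ℕ :=
  {T : SimpleGraph V | T ≤ G ∧ T.IsTree}.ncard

lemma ncard_subgraph_isSpanning_isTree (G : SimpleGraph V) :
    {H : G.Subgraph | H.IsSpanning ∧ H.coe.IsTree}.ncard = numSpanningTrees G := by
  refine Set.ncard_congr (fun H _ => H.spanningCoe) (fun H hH => ?_) (fun H K hH hK h => ?_)
    (fun T hT => ?_)
  · exact ⟨H.spanningCoe_le, (H.spanningCoeEquivCoeOfSpanning hH.1).isTree_iff.mpr hH.2⟩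
  · exact SimpleGraph.Subgraph.ext (hH.1.verts_eq_univ.trans hK.1.verts_eq_univ.symm)
      (congrArg SimpleGraph.Adj h)
  · have hspan := SimpleGraph.toSubgraph.isSpanning T hT.1
    exact ⟨SimpleGraph.toSubgraph T hT.1,
      ⟨hspan, (SimpleGraph.Subgraph.spanningCoeEquivCoeOfSpanning _ hspan).isTree_iff.mp hT.2⟩, rfl⟩

lemma numSpanningTrees_congr {W : Type*} {G : SimpleGraph V} {H : SimpleGraph W} (e : G ≃g H) :
    numSpanningTrees G = numSpanningTrees H := by
  refine Nat.card_congr (e.toEquiv.simpleGraph.subtypeEquiv fun T => and_congr ?_ ?_)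
  · refine ⟨fun h v w hvw => e.symm.map_adj_iff.mp (h hvw), fun h v w hvw => ?_⟩
    exact e.map_adj_iff.mp (h (show T.Adj (e.symm (e v)) (e.symm (e w)) by simpa using hvw))
  · exact (SimpleGraph.Iso.comap e.symm.toEquiv T).isTree_iff.symm

/-- `p` is the parent map of a tree on `V` rooted at `r`: it fixes the root, and every vertex
reaches the root by iterating `p`. -/
structure IsParentMap (r : V) (p : V → V) : Prop where
  map_root : p r = r
  exists_iterate_eq (v : V) : ∃ k : ℕ, p^[k] v = r

/-- The graph joining every vertex to its image under `p`, as long as the two differ. For a parent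
map this is the undirected tree that it describes. -/
def parentGraph (p : V → V) : SimpleGraph V :=
  SimpleGraph.fromRel fun v w => p v = w

namespace IsParentMap

variable {r : V} {p q : V → V}

lemma induction (hp : IsParentMap r p) {motive : V → Prop} (root : motive r)
    (step : ∀ v, v ≠ r → motive (p v) → motive v) (v : V) : motive v := by
  obtain ⟨k, hk⟩ := hp.exists_iterate_eq v
  induction k generalizing v with
  | zero =>
    have hv : v = r := hk
    exact hv ▸ root
  | succ k ih =>
    by_cases hv : v = r
    · exact hv ▸ root
    · exact step v hv (ih (p v) hk)

open Classical in
/-- The distance from `v` to the root in the rooted tree with parent map `p`. -/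
noncomputable def depth (hp : IsParentMap r p) (v : V) : ℕ :=
  Nat.find (hp.exists_iterate_eq v)

lemma depth_eq_depth_map_add_one (hp : IsParentMap r p) {v : V} (hv : v ≠ r) :
    hp.depth v = hp.depth (p v) + 1 := by
  classical
  exact Nat.find_comp_succ _ (hp.exists_iterate_eq (p v)) hv

lemma map_ne_self (hp : IsParentMap r p) {v : V} (hv : v ≠ r) : p v ≠ v := fun h => by
  have := hp.depth_eq_depth_map_add_one hv
  rw [h] at this
  lia

lemma map_map_ne_self (hp : IsParentMap r p) {v : V} (hv : v ≠ r) : p (p v) ≠ v := fun h => by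
  by_cases hpv : p v = r
  · exact hv (by rw [← h, hpv, hp.map_root])
  · have h₁ := hp.depth_eq_depth_map_add_one hv
    have h₂ := hp.depth_eq_depth_map_add_one hpv
    rw [h] at h₂
    lia

lemma parentGraph_adj_map (hp : IsParentMap r p) {v : V} (hv : v ≠ r) :
    (parentGraph p).Adj v (p v) :=
  ⟨(hp.map_ne_self hv).symm, .inl rfl⟩

lemma parentGraph_le_iff (hp : IsParentMap r p) {G : SimpleGraph V} :
    parentGraph p ≤ G ↔ ∀ v, v ≠ r → G.Adj v (p v) := by
  refine ⟨fun h v hv => h (hp.parentGraph_adj_map hv), fun h => ?_⟩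
  have hG : ∀ v, v ≠ p v → G.Adj v (p v) := fun v hv =>
    h v fun hvr => hv (by rw [hvr, hp.map_root])
  rintro v w ⟨hvw, rfl | rfl⟩
  · exact hG v hvw
  · exact (hG w hvw.symm).symm

lemma connected_parentGraph (hp : IsParentMap r p) : (parentGraph p).Connected := by
  have hroot : ∀ v, (parentGraph p).Reachable v r :=
    hp.induction .rfl fun v hv ih => (hp.parentGraph_adj_map hv).reachable.trans ih
  exact { preconnected := fun v w => (hroot v).trans (hroot w).symm, nonempty := ⟨r⟩ }

lemma isTree_parentGraph [Finite V] (hp : IsParentMap r p) : (parentGraph p).IsTree := by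
  rw [SimpleGraph.isTree_iff_connected_and_card]
  refine ⟨hp.connected_parentGraph, le_antisymm ?_
    hp.connected_parentGraph.card_vert_le_card_edgeSet_add_one⟩
  have hsub : (parentGraph p).edgeSet ⊆ (fun v => s(v, p v)) '' {r}ᶜ := by
    intro e he
    induction e with | _ v w
    obtain ⟨hvw, rfl | rfl⟩ := (SimpleGraph.mem_edgeSet _).mp he
    · exact ⟨v, fun hv => hvw (by rw [hv, hp.map_root]), rfl⟩
    · exact ⟨w, fun hw => hvw (by rw [hw, hp.map_root]), Sym2.eq_swap⟩
  calc Nat.card (parentGraph p).edgeSet + 1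
      ≤ ({r}ᶜ : Set V).ncard + 1 :=
        Nat.add_le_add_right ((Set.ncard_le_ncard hsub).trans (Set.ncard_image_le)) 1
    _ = Nat.card V := by
        rw [add_comm, ← Set.ncard_singleton r, Set.ncard_add_ncard_compl]

lemma eq_of_parentGraph_eq (hp : IsParentMap r p) (hq : IsParentMap r q)
    (h : parentGraph p = parentGraph q) : p = q := by
  refine funext (hp.induction (hp.map_root.trans hq.map_root.symm) fun v hv ih => ?_)
  obtain ⟨-, hqv | hqv⟩ := h ▸ hp.parentGraph_adj_map hv
  · exact hqv.symm
  · exact absurd (ih.trans hqv) (hp.map_map_ne_self hv)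

end IsParentMap

lemma exists_isParentMap_of_connected {G : SimpleGraph V} (hG : G.Connected) (r : V) :
    ∃ p, IsParentMap r p ∧ ∀ v, v ≠ r → G.Adj v (p v) := by
  classical
  have hcloser : ∀ v, v ≠ r → ∃ w, G.Adj v w ∧ G.dist w r < G.dist v r := fun v hv => by
    obtain ⟨walk, hwalk⟩ := hG.exists_walk_length_eq_dist v r
    cases walk with
    | nil => exact absurd rfl hv
    | cons hadj tail =>
      exact ⟨_, hadj, by
        rw [← hwalk, SimpleGraph.Walk.length_cons, Nat.lt_succ_iff]
        exact SimpleGraph.dist_le tail⟩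
  choose! f hadj hdist using hcloser
  have hf : ∀ v, v ≠ r → Function.update f r r v = f v := fun v hv =>
    Function.update_of_ne hv r f
  refine ⟨Function.update f r r, ⟨Function.update_self r r f, fun v => ?_⟩,
    fun v hv => (hf v hv).symm ▸ hadj v hv⟩
  induction hn : G.dist v r using Nat.strong_induction_on generalizing v with
  | _ n ih =>
    by_cases hv : v = r
    · exact ⟨0, hv⟩
    · obtain ⟨k, hk⟩ := ih _ (hn ▸ hdist v hv) (f v) rfl
      exact ⟨k + 1, by rwa [Function.iterate_succ_apply, hf v hv]⟩

lemma bijOn_parentGraph [Finite V] (G : SimpleGraph V) (r : V) :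
    Set.BijOn parentGraph {p | IsParentMap r p ∧ ∀ v, v ≠ r → G.Adj v (p v)}
      {T | T ≤ G ∧ T.IsTree} := by
  refine ⟨fun p ⟨hp, hpG⟩ => ⟨hp.parentGraph_le_iff.mpr hpG, hp.isTree_parentGraph⟩,
    fun p hp q hq => hp.1.eq_of_parentGraph_eq hq.1, fun T ⟨hTG, hT⟩ => ?_⟩
  obtain ⟨p, hp, hpT⟩ := exists_isParentMap_of_connected hT.connected r
  have hle : parentGraph p ≤ T := hp.parentGraph_le_iff.mpr hpT
  have hmin := SimpleGraph.isTree_iff_minimal_connected.mp hT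
  exact ⟨p, ⟨hp, fun v hv => hTG (hpT v hv)⟩,
    le_antisymm hle (hmin.le_of_le hp.connected_parentGraph hle)⟩

end SpanningTrees

section MatrixTree

variable {V R : Type*} [DecidableEq V] [CommRing R]

variable (R) in
/-- The matrix with row `v` equal to `e_v - e_{p v}` for `v ≠ r`, and row `r` equal to `e_r`. The
reduced Laplacian determinant expands, row by row, into determinants of such matrices. -/
def parentMatrix (r : V) (p : V → V) : Matrix V V R :=
  Matrix.of fun v => if v = r then Pi.single r 1 else Pi.single v 1 - Pi.single (p v) 1

lemma IsParentMap.parentMatrix_apply_of_depth_le {r : V} {p : V → V} (hp : IsParentMap r p)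
    {v w : V} (h : hp.depth v ≤ hp.depth w) : parentMatrix R r p v w = (1 : Matrix V V R) v w := by
  by_cases hv : v = r
  · simp [parentMatrix, hv, Matrix.one_eq_pi_single]
  · have hw : w ≠ p v := fun hw => by
      have := hp.depth_eq_depth_map_add_one hv
      rw [hw] at h
      lia
    simp [parentMatrix, hv, hw, Matrix.one_eq_pi_single]

variable [Fintype V]

lemma det_parentMatrix_eq_zero {r : V} {p : V → V} (h : ∃ v, ∀ k : ℕ, p^[k] v ≠ r) :
    (parentMatrix R r p).det = 0 := by
  classical
  -- The indicator of the vertices that never reach `r` lies in the kernel.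
  let x : V → R := fun v => if ∃ k : ℕ, p^[k] v = r then 0 else 1
  have hroot : x r = 0 := if_pos ⟨0, rfl⟩
  have hstep : ∀ v, v ≠ r → x (p v) = x v := fun v hv => by
    have hiff : (∃ k : ℕ, p^[k] (p v) = r) ↔ ∃ k : ℕ, p^[k] v = r := by
      refine ⟨fun ⟨k, hk⟩ => ⟨k + 1, hk⟩, fun ⟨k, hk⟩ => ?_⟩
      cases k with
      | zero => exact absurd hk hv
      | succ k => exact ⟨k, hk⟩
    simp only [x, hiff]
  have hker : parentMatrix R r p *ᵥ x = 0 := by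
    funext v
    by_cases hv : v = r
    · simp [parentMatrix, mulVec, hv, hroot]
    · simp only [mulVec, parentMatrix, of_apply, hv, if_false, sub_dotProduct, single_dotProduct]
      simp [hstep v hv]
  obtain ⟨v, hv⟩ := h
  have hxv : x v = 1 := if_neg (not_exists.mpr hv)
  have hdet := congrFun (congrArg ((parentMatrix R r p).adjugate *ᵥ ·) hker) v
  simpa [adjugate_mul, smul_mulVec, hxv] using hdet

lemma IsParentMap.det_parentMatrix {r : V} {p : V → V} (hp : IsParentMap r p) :
    (parentMatrix R r p).det = 1 := by
  have htri : (parentMatrix R r p).BlockTriangular (OrderDual.toDual ∘ hp.depth) := fun v w h => by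
    have hlt : hp.depth v < hp.depth w := h
    rw [hp.parentMatrix_apply_of_depth_le hlt.le,
      Matrix.one_apply_ne fun hvw => hlt.ne (congrArg hp.depth hvw)]
  rw [htri.det]
  refine prod_eq_one fun a _ => ?_
  suffices (parentMatrix R r p).toSquareBlock (OrderDual.toDual ∘ hp.depth) a = 1 by
    rw [this, det_one]
  ext ⟨v, hv⟩ ⟨w, hw⟩
  have hdepth : hp.depth v = hp.depth w := hv.trans hw.symm
  simp [toSquareBlock_def, hp.parentMatrix_apply_of_depth_le hdepth.le, Matrix.one_apply]

lemma lapMatrix_row_eq_sum (G : SimpleGraph V) [DecidableRel G.Adj] (v : V) :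
    G.lapMatrix R v = ∑ w ∈ G.neighborFinset v, (Pi.single v 1 - Pi.single w 1) := by
  ext w
  simp [SimpleGraph.lapMatrix, SimpleGraph.degMatrix, Matrix.diagonal_apply, Pi.single_apply,
    eq_comm]

lemma adjugate_lapMatrix_eq_sum_det_parentMatrix (G : SimpleGraph V) [DecidableRel G.Adj] (r : V) :
    (G.lapMatrix R).adjugate r r =
      ∑ p : V → V with p r = r ∧ ∀ v, v ≠ r → G.Adj v (p v), (parentMatrix R r p).det := by
  let choices : V → Finset V := fun v => if v = r then {r} else G.neighborFinset v
  let row : V → V → V → R := fun v w =>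
    if v = r then Pi.single r 1 else Pi.single v 1 - Pi.single w 1
  have hrows : (G.lapMatrix R).updateRow r (Pi.single r 1) =
      fun v => ∑ w ∈ choices v, row v w := by
    funext v
    by_cases hv : v = r
    · simp [choices, row, hv]
    · simpa [choices, row, hv] using lapMatrix_row_eq_sum (R := R) G v
  have hchoices : Fintype.piFinset choices =
      ({p | p r = r ∧ ∀ v, v ≠ r → G.Adj v (p v)} : Finset (V → V)) := by
    ext p
    simp only [Fintype.mem_piFinset, mem_filter_univ]
    refine ⟨fun h => ⟨by simpa [choices] using h r, fun v hv => by
      simpa [choices, hv] using h v⟩, fun ⟨hr, h⟩ v => ?_⟩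
    by_cases hv : v = r
    · simp [choices, hv, hr]
    · simpa [choices, hv] using h v hv
  rw [adjugate_apply, hrows, ← hchoices]
  exact (detRowAlternating (n := V) (R := R)).toMultilinearMap.map_sum_finset row choices

/-- Kirchhoff's matrix-tree theorem. -/
theorem adjugate_lapMatrix_apply_self (G : SimpleGraph V) [DecidableRel G.Adj] (r : V) :
    (G.lapMatrix R).adjugate r r = numSpanningTrees G := by
  classical
  have hdet : ∀ p : V → V, p r = r →
      (parentMatrix R r p).det = if IsParentMap r p then 1 else 0 := fun p hpr => by
    split_ifs with hp
    · exact hp.det_parentMatrix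
    · refine det_parentMatrix_eq_zero ?_
      by_contra! h
      exact hp ⟨hpr, h⟩
  have hset : {p : V → V | IsParentMap r p ∧ ∀ v, v ≠ r → G.Adj v (p v)} =
      ({p | p r = r ∧ ∀ v, v ≠ r → G.Adj v (p v)} : Finset (V → V)).filter (IsParentMap r) := by
    ext p
    have := @IsParentMap.map_root V r p
    simp only [coe_filter, mem_filter_univ, Set.mem_ofPred_eq]
    tauto
  rw [adjugate_lapMatrix_eq_sum_det_parentMatrix,
    sum_congr rfl fun p hp => hdet p (mem_filter.mp hp).2.1, sum_boole, numSpanningTrees,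
    ← (bijOn_parentGraph G r).image_eq, (bijOn_parentGraph G r).injOn.ncard_image, hset,
    Set.ncard_coe_finset]

end MatrixTree

section LaplacianEigenbasis

open scoped Kronecker

lemma card_mul_adjugate_apply_self {V K : Type*} [Fintype V] [DecidableEq V] [CommRing K]
    [IsDomain K] {A W : Matrix V V K} {d : V → K} {o : V} (hrow : A *ᵥ 1 = 0) (hcol : 1 ᵥ* A = 0)
    (hAW : A * W = W * diagonal d) (hW : W.det ≠ 0) (hWo : ∀ v, W v o = 1) :
    (Fintype.card V : K) * A.adjugate o o = ∏ x ∈ univ.erase o, d x := by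
  set c := ∏ x ∈ univ.erase o, d x
  have hdo : d o = 0 := by
    have h := congrFun (congrFun hAW o) o
    rw [mul_diagonal, hWo, one_mul, Matrix.mul_apply] at h
    simpa [hWo, ← h, mulVec, dotProduct] using congrFun hrow o
  have hadj : W.det * A.adjugate o o = c * W.adjugate o o := by
    have h : W.det • A.adjugate = W * diagonal (fun x => ∏ y ∈ univ.erase x, d y) * W.adjugate := by
      rw [← adjugate_diagonal, Matrix.mul_assoc, ← adjugate_mul_distrib, ← hAW,
        adjugate_mul_distrib, ← Matrix.mul_assoc, mul_adjugate, smul_mul, Matrix.one_mul]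
    have hoo := congrFun (congrFun h o) o
    rw [Matrix.smul_apply, smul_eq_mul, Matrix.mul_apply, Fintype.sum_eq_single o] at hoo
    · rwa [mul_diagonal, hWo, one_mul] at hoo
    · intro x hx
      rw [mul_diagonal, prod_eq_zero (mem_erase.mpr ⟨hx.symm, mem_univ o⟩) hdo, mul_zero, zero_mul]
  have hcW : c * W.det = c * (Fintype.card V * W.adjugate o o) := by
    have hs : ∀ x, x ≠ o → c * (1 ᵥ* W) x = 0 := fun x hx => by
      have h : (1 ᵥ* W ᵥ* diagonal d) x = 0 := by
        rw [vecMul_vecMul, ← hAW, ← vecMul_vecMul, hcol, zero_vecMul, Pi.zero_apply]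
      rw [vecMul_diagonal] at h
      obtain ⟨b, hb⟩ : d x ∣ c := dvd_prod_of_mem d (mem_erase.mpr ⟨hx, mem_univ x⟩)
      rw [hb, mul_right_comm, mul_comm (d x), h, zero_mul]
    have hdet : W.det = ∑ x, (1 ᵥ* W) x * W.adjugate x o := by
      have h : (1 ᵥ* W ᵥ* W.adjugate) o = W.det := by
        simp [vecMul_vecMul, mul_adjugate, vecMul_smul]
      exact h.symm
    rw [hdet, mul_sum, Fintype.sum_eq_single o fun x hx => by rw [← mul_assoc, hs x hx, zero_mul]]
    simp [vecMul, dotProduct, hWo]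
  refine mul_left_cancel₀ hW ?_
  rw [mul_left_comm, hadj, mul_comm W.det, hcW, mul_left_comm]

theorem card_mul_numSpanningTrees {V K : Type*} [Fintype V] [DecidableEq V] [CommRing K]
    [IsDomain K] (G : SimpleGraph V) [DecidableRel G.Adj] {W : Matrix V V K} {d : V → K} {o : V}
    (hGW : G.lapMatrix K * W = W * diagonal d) (hW : W.det ≠ 0) (hWo : ∀ v, W v o = 1) :
    (Fintype.card V : K) * numSpanningTrees G = ∏ x ∈ univ.erase o, d x := by
  have hrow : G.lapMatrix K *ᵥ 1 = 0 := G.lapMatrix_mulVec_const_eq_zero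
  have hcol : 1 ᵥ* G.lapMatrix K = 0 := by
    rw [← mulVec_transpose, (G.isSymm_lapMatrix (R := K)).eq, hrow]
  rw [← adjugate_lapMatrix_apply_self G o, card_mul_adjugate_apply_self hrow hcol hGW hW hWo]

variable {α β R : Type*} [Fintype α] [Fintype β] [DecidableEq α] [DecidableEq β] [CommRing R]
  (G : SimpleGraph α) (H : SimpleGraph β) [DecidableRel G.Adj] [DecidableRel H.Adj]
  [DecidableRel (G.boxProd H).Adj]

lemma lapMatrix_boxProd :
    (G.boxProd H).lapMatrix R = G.lapMatrix R ⊗ₖ 1 + 1 ⊗ₖ H.lapMatrix R := by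
  ext ⟨a, b⟩ ⟨a', b'⟩
  have hdeg : ((G.boxProd H).degMatrix R (a, b) (a, b)) = G.degree a + H.degree b := by
    rw [SimpleGraph.degMatrix, diagonal_apply_eq, ← Nat.cast_add]
    congr 1
    convert SimpleGraph.degree_boxProd (G := G) (H := H) (a, b)
  rw [SimpleGraph.degMatrix, diagonal_apply_eq] at hdeg
  simp only [SimpleGraph.lapMatrix, SimpleGraph.degMatrix, Matrix.sub_apply, diagonal_apply,
    SimpleGraph.adjMatrix_apply, Matrix.add_apply, kroneckerMap_apply, Matrix.one_apply,
    SimpleGraph.boxProd_adj, Prod.mk.injEq]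
  by_cases ha : a = a' <;> by_cases hb : b = b' <;> simp [ha, hb, hdeg]

lemma lapMatrix_boxProd_mul_kronecker {W : Matrix α α R} {W' : Matrix β β R} {d : α → R}
    {d' : β → R} (hW : G.lapMatrix R * W = W * diagonal d)
    (hW' : H.lapMatrix R * W' = W' * diagonal d') :
    (G.boxProd H).lapMatrix R * (W ⊗ₖ W') =
      (W ⊗ₖ W') * diagonal fun x => d x.1 + d' x.2 := by
  rw [lapMatrix_boxProd, add_mul, ← mul_kronecker_mul, ← mul_kronecker_mul, hW, hW',
    Matrix.one_mul, Matrix.one_mul]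
  ext ⟨a, b⟩ ⟨i, j⟩
  simp only [Matrix.add_apply, kroneckerMap_apply, mul_diagonal]
  ring

end LaplacianEigenbasis

section PathSpectrum

open Real SimpleGraph

lemma lapMatrix_pathGraph_mulVec {R : Type*} [Ring R] {l : ℕ}
    [DecidableRel (pathGraph l).Adj] {f : ℤ → R} (hfirst : f (-1) = f 0)
    (hlast : f l = f (l - 1)) (a : Fin l) :
    ((pathGraph l).lapMatrix R *ᵥ fun b => f b) a = 2 * f a - f (a - 1) - f (a + 1) := by
  have hsplit : ∀ b : Fin l, (if (pathGraph l).Adj a b then f a - f b else 0) =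
      (if (a : ℕ) + 1 = b then f a - f b else 0) +
        (if (b : ℕ) + 1 = a then f a - f b else 0) := fun b => by
    simp only [pathGraph_adj]
    split_ifs <;> first | lia | simp
  have hnext : ∑ b : Fin l, (if (a : ℕ) + 1 = b then f a - f b else 0) = f a - f (a + 1) := by
    rw [Fin.sum_univ_eq_sum_range fun b : ℕ => if (a : ℕ) + 1 = b then f a - f b else 0,
      sum_ite_eq]
    split_ifs with h
    · push_cast
      rfl
    · have hl : (l : ℤ) = a + 1 := by grind
      rw [hl, add_sub_cancel_right] at hlast
      rw [hlast, sub_self]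
  have hprev : ∑ b : Fin l, (if (b : ℕ) + 1 = a then f a - f b else 0) = f a - f (a - 1) := by
    rw [Fin.sum_univ_eq_sum_range fun b : ℕ => if b + 1 = (a : ℕ) then f a - f b else 0]
    obtain ⟨k, hk⟩ := a
    cases k with
    | zero => simp [hfirst]
    | succ k => simp [(Nat.lt_succ_self k).trans hk]
  calc ((pathGraph l).lapMatrix R *ᵥ fun b => f b) a
      = ∑ b, if (pathGraph l).Adj a b then f a - f b else 0 := by
        rw [lapMatrix_mulVec_apply, ← sum_filter, ← neighborFinset_eq_filter, sum_sub_distrib,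
          sum_const, card_neighborFinset_eq_degree, nsmul_eq_mul]
    _ = 2 * f a - f (a - 1) - f (a + 1) := by
        rw [sum_congr rfl fun b _ => hsplit b, sum_add_distrib, hnext, hprev, two_mul]
        abel

/-- The eigenvalues of the Laplacian of the path on `l` vertices, for `i < l`. -/
noncomputable def pathEigenvalue (l i : ℕ) : ℝ :=
  2 - 2 * cos (i * π / l)

/-- The matrix whose `i`-th column is the eigenvector of the Laplacian of the path on `l` vertices
for `pathEigenvalue l i`: a cosine wave sampled at the half-integers `a + 1/2`. -/
noncomputable def pathEigenmatrix (l : ℕ) : Matrix (Fin l) (Fin l) ℝ :=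
  of fun a i => cos (i * π * (2 * a + 1) / (2 * l))

lemma pathEigenvalue_zero (l : ℕ) : pathEigenvalue l 0 = 0 := by
  simp [pathEigenvalue]

lemma injective_pathEigenvalue (l : ℕ) :
    Function.Injective fun i : Fin l => pathEigenvalue l i := by
  intro i j hij
  have hl : (0 : ℝ) < l := Nat.cast_pos.mpr i.pos
  have hmem : ∀ k : Fin l, k * π / l ∈ Set.Icc 0 π := fun k => by
    refine ⟨by positivity, (div_le_iff₀ hl).mpr ?_⟩
    rw [mul_comm]
    exact mul_le_mul_of_nonneg_left (Nat.cast_le.mpr k.isLt.le) pi_pos.le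
  have hcos : cos (i * π / l) = cos (j * π / l) := by
    simp only [pathEigenvalue] at hij
    linarith
  have h := injOn_cos (hmem i) (hmem j) hcos
  field_simp at h
  exact Fin.ext (Nat.cast_injective h)

lemma lapMatrix_pathGraph_mulVec_pathEigenmatrix {l : ℕ} [DecidableRel (pathGraph l).Adj]
    (i : Fin l) : (pathGraph l).lapMatrix ℝ *ᵥ (pathEigenmatrix l).col i =
      pathEigenvalue l i • (pathEigenmatrix l).col i := by
  have hl : (l : ℝ) ≠ 0 := Nat.cast_ne_zero.mpr i.pos.ne'
  -- The eigenvector extends to a function on `ℤ` that is symmetric about both ends of the path.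
  let f : ℤ → ℝ := fun a => cos (i * π * (2 * a + 1) / (2 * l))
  have hfirst : f (-1) = f 0 := by
    simp only [f]
    rw [← cos_neg]
    congr 1
    push_cast
    ring
  have hlast : f l = f (l - 1) := by
    simp only [f]
    rw [← cos_nat_mul_two_pi_sub _ i]
    congr 1
    push_cast
    field_simp
    ring
  funext a
  have hprev : f (a - 1) = cos (i * π * (2 * a + 1) / (2 * l) - i * π / l) := by
    simp only [f]
    congr 1
    push_cast
    field_simp
    ring
  have hnext : f (a + 1) = cos (i * π * (2 * a + 1) / (2 * l) + i * π / l) := by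
    simp only [f]
    congr 1
    push_cast
    field_simp
    ring
  have h := lapMatrix_pathGraph_mulVec hfirst hlast a
  rw [hprev, hnext, cos_sub, cos_add] at h
  refine h.trans ?_
  simp only [f, pathEigenvalue, pathEigenmatrix, Pi.smul_apply, col_apply, of_apply, smul_eq_mul,
    Int.cast_natCast]
  ring

lemma lapMatrix_pathGraph_mul_pathEigenmatrix (l : ℕ) [DecidableRel (pathGraph l).Adj] :
    (pathGraph l).lapMatrix ℝ * pathEigenmatrix l =
      pathEigenmatrix l * diagonal fun i : Fin l => pathEigenvalue l i := by
  ext a i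
  rw [mul_diagonal, mul_comm]
  exact congrFun (lapMatrix_pathGraph_mulVec_pathEigenmatrix i) a

lemma pathEigenmatrix_col_ne_zero {l : ℕ} (i : Fin l) : (pathEigenmatrix l).col i ≠ 0 := by
  have hl : (0 : ℝ) < l := Nat.cast_pos.mpr i.pos
  have hpos : 0 < cos (i * π / (2 * l)) := by
    refine cos_pos_of_mem_Ioo ⟨by linarith [pi_pos, show 0 ≤ i * π / (2 * l) by positivity], ?_⟩
    rw [div_lt_div_iff₀ (by positivity) two_pos]
    have := mul_lt_mul_of_pos_right (Nat.cast_lt (α := ℝ).mpr i.isLt) pi_pos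
    linarith
  refine fun h => hpos.ne' ?_
  simpa [pathEigenmatrix] using congrFun h ⟨0, i.pos⟩

lemma det_pathEigenmatrix_ne_zero (l : ℕ) : (pathEigenmatrix l).det ≠ 0 := by
  classical
  have hindep : LinearIndependent ℝ (pathEigenmatrix l).col :=
    Module.End.eigenvectors_linearIndependent' (toLin' ((pathGraph l).lapMatrix ℝ))
      (fun i : Fin l => pathEigenvalue l i) (injective_pathEigenvalue l) _ fun i =>
        Module.End.hasEigenvector_iff.mpr ⟨Module.End.mem_eigenspace_iff.mpr <|
          lapMatrix_pathGraph_mulVec_pathEigenmatrix i, pathEigenmatrix_col_ne_zero i⟩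
  exact ((isUnit_iff_isUnit_det _).mp (linearIndependent_cols_iff_isUnit.mp hindep)).ne_zero

lemma prod_add_pathEigenvalue {m : ℕ} (hm : 0 < m) (y : ℝ) :
    ∏ j ∈ Ico 1 m, (y + pathEigenvalue m j) =
      (Polynomial.Chebyshev.U ℝ (m - 1 : ℤ)).eval (1 + y / 2) := by
  obtain ⟨k, rfl⟩ := Nat.exists_eq_add_one.mpr hm
  have hindex : ((k + 1 : ℕ) - 1 : ℤ) = k := by push_cast; ring
  have hroots := Polynomial.Chebyshev.roots_U_real k
  have hinj := (range k).nodup_map_iff_injOn.mp (Polynomial.Chebyshev.roots_U_real_nodup k)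
  have hsplits : (Polynomial.Chebyshev.U ℝ (k : ℤ)).Splits := by
    rw [Polynomial.splits_iff_card_roots, hroots, card_val, card_image_of_injOn hinj, card_range,
      Polynomial.Chebyshev.natDegree_U_natCast]
  rw [hindex, hsplits.eval_eq_prod_roots, Polynomial.Chebyshev.leadingCoeff_U_natCast, hroots]
  change _ = _ * ∏ x ∈ _, _
  rw [prod_image hinj, prod_Ico_eq_prod_range, Nat.add_sub_cancel, ← card_range k, ← prod_const,
    card_range, ← prod_mul_distrib]
  refine prod_congr rfl fun j _ => ?_
  simp only [pathEigenvalue]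
  push_cast
  ring_nf

lemma prod_pathEigenvalue {m : ℕ} (hm : 0 < m) : ∏ j ∈ Ico 1 m, pathEigenvalue m j = m := by
  simpa [Polynomial.Chebyshev.U_eval_one] using prod_add_pathEigenvalue hm 0

lemma prod_univ_erase_zero_zero {M : Type*} [CommMonoid M] {k k' : ℕ}
    (f : Fin (k + 1) × Fin (k' + 1) → M) :
    ∏ x ∈ univ.erase (0, 0), f x = (∏ i : Fin k, f (i.succ, 0)) *
      ((∏ j : Fin k', f (0, j.succ)) * ∏ i : Fin k, ∏ j : Fin k', f (i.succ, j.succ)) := by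
  have h := prod_update_of_mem (mem_univ (0, 0)) f 1
  rw [one_mul, sdiff_singleton_eq_erase] at h
  rw [← h, Fintype.prod_prod_type]
  simp [Fin.prod_univ_succ, Function.update_apply, prod_mul_distrib, mul_left_comm]

lemma gridTau_eq_numSpanningTrees (l m : ℕ) : gridTau l m = numSpanningTrees (gridGraph l m) :=
  ncard_subgraph_isSpanning_isTree _

lemma gridTau_comm (l m : ℕ) : gridTau l m = gridTau m l := by
  rw [gridTau_eq_numSpanningTrees, gridTau_eq_numSpanningTrees]
  exact numSpanningTrees_congr (boxProdComm _ _)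

open scoped Kronecker in
theorem gridTau_eq_prod {l m : ℕ} (hl : 0 < l) (hm : 0 < m) :
    (gridTau l m : ℝ) =
      ∏ i ∈ Ico 1 l, ∏ j ∈ Ico 1 m, (pathEigenvalue l i + pathEigenvalue m j) := by
  classical
  have hprodl := prod_pathEigenvalue hl
  have hprodm := prod_pathEigenvalue hm
  have hlm : (l : ℝ) * m ≠ 0 := by positivity
  obtain ⟨k, rfl⟩ := Nat.exists_eq_add_one.mpr hl
  obtain ⟨k', rfl⟩ := Nat.exists_eq_add_one.mpr hm
  have hdet : (pathEigenmatrix (k + 1) ⊗ₖ pathEigenmatrix (k' + 1)).det ≠ 0 := by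
    rw [det_kronecker]
    exact mul_ne_zero (pow_ne_zero _ (det_pathEigenmatrix_ne_zero _))
      (pow_ne_zero _ (det_pathEigenmatrix_ne_zero _))
  have h := card_mul_numSpanningTrees (o := (0, 0)) _
    (lapMatrix_boxProd_mul_kronecker (pathGraph (k + 1)) (pathGraph (k' + 1))
      (lapMatrix_pathGraph_mul_pathEigenmatrix _) (lapMatrix_pathGraph_mul_pathEigenmatrix _))
    hdet (fun v => by simp [pathEigenmatrix])
  rw [prod_univ_erase_zero_zero] at h
  simp only [prod_Ico_eq_prod_range, Nat.add_sub_cancel, prod_range, add_comm 1] at hprodl hprodm ⊢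
  simp only [Fin.val_zero, Fin.val_succ, pathEigenvalue_zero, zero_add, add_zero, hprodl, hprodm,
    Fintype.card_prod, Fintype.card_fin, Nat.cast_mul, ← mul_assoc] at h
  rw [gridTau_eq_numSpanningTrees]
  exact mul_left_cancel₀ hlm h

end PathSpectrum

section HyperbolicForm

open Real

/-- The hyperbolic angle `θ` with `cosh θ = 1 + pathEigenvalue l i / 2`. -/
noncomputable def pathAngle (l i : ℕ) : ℝ :=
  2 * arsinh (sin (i * π / (2 * l)))

lemma cosh_pathAngle (l i : ℕ) : cosh (pathAngle l i) = 1 + pathEigenvalue l i / 2 := by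
  have hdouble : i * π / l = 2 * (i * π / (2 * l)) := by ring
  rw [pathAngle, cosh_two_mul, cosh_sq, sinh_arsinh, pathEigenvalue, hdouble, cos_two_mul, cos_sq']
  ring

lemma div_le_sin {l i : ℕ} (hil : i ≤ l) : (i : ℝ) / l ≤ sin (i * π / (2 * l)) := by
  have hangle : i * π / (2 * l) = i / l * (π / 2) := by ring
  have hle : i / l * (π / 2) ≤ π / 2 :=
    mul_le_of_le_one_left (by positivity) (div_le_one_of_le₀ (Nat.cast_le.mpr hil) l.cast_nonneg)
  have h := mul_le_sin (by positivity) hle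
  rwa [mul_left_comm, div_mul_div_cancel₀ pi_ne_zero, div_self two_ne_zero, mul_one,
    ← hangle] at h

lemma pathAngle_pos {l i : ℕ} (hi : i ∈ Ico 1 l) : 0 < pathAngle l i := by
  obtain ⟨hi₁, hil⟩ := mem_Ico.mp hi
  have hdiv : (0 : ℝ) < i / l :=
    div_pos (Nat.cast_pos.mpr hi₁) (Nat.cast_pos.mpr (hi₁.trans hil.le))
  exact mul_pos two_pos (arsinh_pos_iff.mpr (hdiv.trans_le (div_le_sin hil.le)))

/-- The product of `2 * sinh (x * θ)` over the hyperbolic angles `θ` of the nonzero eigenvalues of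
the path on `l` vertices. Up to the factor `sinhProd l 1` it interpolates `gridTau l m` at
`x = m`. -/
noncomputable def sinhProd (l : ℕ) (x : ℝ) : ℝ :=
  ∏ i ∈ Ico 1 l, 2 * sinh (x * pathAngle l i)

lemma sinhProd_pos (l : ℕ) {x : ℝ} (hx : 0 < x) : 0 < sinhProd l x :=
  prod_pos fun _ hi => mul_pos two_pos (sinh_pos_iff.mpr (mul_pos hx (pathAngle_pos hi)))

lemma log_sinhProd (l : ℕ) {x : ℝ} (hx : 0 < x) :
    log (sinhProd l x) = ∑ i ∈ Ico 1 l, log (2 * sinh (x * pathAngle l i)) :=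
  log_prod fun _ hi => (mul_pos two_pos (sinh_pos_iff.mpr (mul_pos hx (pathAngle_pos hi)))).ne'

theorem gridTau_mul_sinhProd_one {l m : ℕ} (hl : 0 < l) (hm : 0 < m) :
    gridTau l m * sinhProd l 1 = sinhProd l m := by
  rw [gridTau_eq_prod hl hm, sinhProd, sinhProd, ← prod_mul_distrib]
  refine prod_congr rfl fun i _ => ?_
  have h := Polynomial.Chebyshev.U_real_cosh (pathAngle l i) (m - 1)
  push_cast at h
  rw [sub_add_cancel] at h
  rw [prod_add_pathEigenvalue hm, ← cosh_pathAngle, one_mul, mul_left_comm, h]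

lemma gridTau_pos {l m : ℕ} (hl : 0 < l) (hm : 0 < m) : 0 < gridTau l m := by
  have h : 0 < gridTau l m * sinhProd l 1 := by
    rw [gridTau_mul_sinhProd_one hl hm]
    exact sinhProd_pos l (Nat.cast_pos.mpr hm)
  exact Nat.cast_pos.mp (pos_of_mul_pos_left h (sinhProd_pos l one_pos).le)

lemma log_gridTau {l m : ℕ} (hl : 0 < l) (hm : 0 < m) :
    log (gridTau l m) = log (sinhProd l m) - log (sinhProd l 1) := by
  rw [← gridTau_mul_sinhProd_one hl hm, log_mul (Nat.cast_pos.mpr (gridTau_pos hl hm)).ne'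
    (sinhProd_pos l one_pos).ne', add_sub_cancel_right]

end HyperbolicForm

section Growth

open Real

lemma chebyshevU_eval_pos_and_mul_le {R : Type*} [CommRing R] [LinearOrder R]
    [IsStrictOrderedRing R] {x : R} (hx : 1 ≤ x) (k : ℕ) :
    0 < (Polynomial.Chebyshev.U R k).eval x ∧
      (2 * x - 1) * (Polynomial.Chebyshev.U R k).eval x ≤
        (Polynomial.Chebyshev.U R (k + 1)).eval x := by
  induction k with
  | zero => simp
  | succ k ih =>
    obtain ⟨hpos, hle⟩ := ih
    have hmono : (Polynomial.Chebyshev.U R k).eval x ≤ (Polynomial.Chebyshev.U R (k + 1)).eval x :=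
      (le_mul_of_one_le_left hpos.le (by linarith)).trans hle
    have hrec : (Polynomial.Chebyshev.U R (k + 2)).eval x =
        2 * x * (Polynomial.Chebyshev.U R (k + 1)).eval x -
          (Polynomial.Chebyshev.U R k).eval x := by
      simp [Polynomial.Chebyshev.U_add_two]
    push_cast
    rw [add_assoc, one_add_one_eq_two, hrec]
    exact ⟨hpos.trans_le hmono, by linarith⟩

lemma sinhProd_one_sq {l : ℕ} (hl : 0 < l) :
    sinhProd l 1 ^ 2 = l * (Polynomial.Chebyshev.U ℝ (l - 1 : ℤ)).eval 3 := by
  have hU : (Polynomial.Chebyshev.U ℝ (l - 1 : ℤ)).eval 3 =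
      ∏ i ∈ Ico 1 l, (4 + pathEigenvalue l i) := by
    rw [prod_add_pathEigenvalue hl]
    norm_num
  rw [hU, ← prod_pathEigenvalue hl, ← prod_mul_distrib, sinhProd, ← prod_pow]
  refine prod_congr rfl fun i _ => ?_
  rw [one_mul, mul_pow, sinh_sq, cosh_pathAngle]
  ring

lemma five_mul_sinhProd_one_sq_le {n : ℕ} (hn : 0 < n) :
    5 * sinhProd n 1 ^ 2 ≤ sinhProd (n + 1) 1 ^ 2 := by
  obtain ⟨k, rfl⟩ := Nat.exists_eq_add_one.mpr hn
  obtain ⟨hpos, hle⟩ := chebyshevU_eval_pos_and_mul_le (x := (3 : ℝ)) (by norm_num) k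
  rw [sinhProd_one_sq hn, sinhProd_one_sq (Nat.succ_pos _)]
  push_cast
  simp only [add_sub_cancel_right]
  nlinarith [mul_nonneg (k.cast_nonneg (α := ℝ)) hpos.le]

lemma log_sinhProd_one_add_le {n : ℕ} (hn : 0 < n) (d : ℕ) :
    log (sinhProd n 1) + d * (log 5 / 2) ≤ log (sinhProd (n + d) 1) := by
  induction d with
  | zero => simp
  | succ d ih =>
    have hpos := sinhProd_pos (n + d) one_pos
    have h := log_le_log (by positivity) (five_mul_sinhProd_one_sq_le (Nat.add_pos_left hn d))
    rw [log_mul (by norm_num) (by positivity), log_pow, log_pow] at h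
    push_cast at h ⊢
    rw [← add_assoc]
    linarith

end Growth

section Estimates

open Real

lemma exp_neg_two_mul_lt_one {x : ℝ} (hx : 0 < x) : exp (-2 * x) < 1 :=
  exp_lt_one_iff.mpr (mul_neg_of_neg_of_pos (by norm_num) hx)

lemma log_two_sinh {x : ℝ} (hx : 0 < x) :
    log (2 * sinh x) = x + log (1 - exp (-2 * x)) := by
  have hfactor : 2 * sinh x = exp x * (1 - exp (-2 * x)) := by
    rw [sinh_eq, mul_sub, ← exp_add]
    ring_nf
  rw [hfactor, log_mul (exp_pos x).ne' (sub_pos.mpr (exp_neg_two_mul_lt_one hx)).ne', log_exp]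

lemma log_one_sub_exp_nonpos {x : ℝ} (hx : 0 < x) : log (1 - exp (-2 * x)) ≤ 0 :=
  log_nonpos (sub_pos.mpr (exp_neg_two_mul_lt_one hx)).le (sub_le_self 1 (exp_pos _).le)

lemma log_two_sinh_le {x : ℝ} (hx : 0 < x) : log (2 * sinh x) ≤ x := by
  rw [log_two_sinh hx]
  exact add_le_of_nonpos_right (log_one_sub_exp_nonpos hx)

lemma monotoneOn_log_two_sinh_div : MonotoneOn (fun x => log (2 * sinh x) / x) (Set.Ioi 0) := by
  intro x hx y hy hxy
  have hx' : 0 < x := hx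
  have hy' : 0 < y := hy
  have hlog : log (1 - exp (-2 * x)) ≤ log (1 - exp (-2 * y)) :=
    log_le_log (sub_pos.mpr (exp_neg_two_mul_lt_one hx))
      (sub_le_sub_left (exp_le_exp.mpr (by linarith)) 1)
  have hneg := log_one_sub_exp_nonpos hx
  simp only [log_two_sinh hx, log_two_sinh hy, add_div, div_self hx'.ne', div_self hy'.ne']
  gcongr 1 + ?_
  calc log (1 - exp (-2 * x)) / x ≤ log (1 - exp (-2 * x)) / y :=
        mul_le_mul_of_nonpos_left (inv_anti₀ hx hxy) hneg
    _ ≤ log (1 - exp (-2 * y)) / y := by gcongr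

lemma monotoneOn_log_sinhProd_div (l : ℕ) :
    MonotoneOn (fun x => log (sinhProd l x) / x) (Set.Ioi 0) := by
  intro x hx y hy hxy
  simp only [log_sinhProd l hx, log_sinhProd l hy, sum_div]
  refine sum_le_sum fun i hi => ?_
  have hθ := pathAngle_pos hi
  have hscale : ∀ z : ℝ, log (2 * sinh (z * pathAngle l i)) / z =
      pathAngle l i * (log (2 * sinh (z * pathAngle l i)) / (z * pathAngle l i)) := fun z => by
    rw [← mul_div_assoc, mul_comm (pathAngle l i), mul_div_mul_right _ _ hθ.ne']
  rw [hscale x, hscale y]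
  exact mul_le_mul_of_nonneg_left (monotoneOn_log_two_sinh_div (mul_pos hx hθ) (mul_pos hy hθ)
    (mul_le_mul_of_nonneg_right hxy hθ.le)) hθ.le

lemma log_sinhProd_le (l : ℕ) {x : ℝ} (hx : 0 < x) :
    log (sinhProd l x) ≤ x * ∑ i ∈ Ico 1 l, pathAngle l i := by
  rw [log_sinhProd l hx, mul_sum]
  exact sum_le_sum fun i hi => log_two_sinh_le (mul_pos hx (pathAngle_pos hi))

lemma one_sub_sum_le_prod_one_sub {ι R : Type*} [CommRing R] [LinearOrder R]
    [IsStrictOrderedRing R] {s : Finset ι} {f : ι → R} (hf₀ : ∀ i ∈ s, 0 ≤ f i)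
    (hf₁ : ∀ i ∈ s, f i ≤ 1) : 1 - ∑ i ∈ s, f i ≤ ∏ i ∈ s, (1 - f i) := by
  classical
  induction s using Finset.induction_on with
  | empty => simp
  | insert a s ha ih =>
    simp only [forall_mem_insert] at hf₀ hf₁
    have hs := mul_le_mul_of_nonneg_left (ih hf₀.2 hf₁.2) (sub_nonneg.mpr hf₁.1)
    have hcross := mul_nonneg hf₀.1 (sum_nonneg hf₀.2)
    rw [sum_insert ha, prod_insert ha]
    linarith

lemma sum_Ico_one_div_add_one_pow_four_le (n : ℕ) :
    ∑ i ∈ Ico 1 n, 1 / ((i : ℝ) + 1) ^ 4 ≤ 1 / 4 := by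
  rcases n.eq_zero_or_pos with rfl | hn
  · simp
  have hfourth : ∀ i ∈ Ico 1 n, 1 / ((i : ℝ) + 1) ^ 4 ≤ 4⁻¹ * (((i + 1 : ℕ) : ℝ) ^ 2)⁻¹ := by
    intro i hi
    have hi₁ : (1 : ℝ) ≤ i := Nat.one_le_cast.mpr (mem_Ico.mp hi).1
    push_cast
    calc 1 / ((i : ℝ) + 1) ^ 4
        = (((i : ℝ) + 1) ^ 2)⁻¹ * (((i : ℝ) + 1) ^ 2)⁻¹ := by
          rw [one_div, ← mul_inv, ← pow_add]
      _ ≤ 4⁻¹ * (((i : ℝ) + 1) ^ 2)⁻¹ := by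
        gcongr
        nlinarith
  have hsq : ∑ i ∈ Ico 1 n, (((i + 1 : ℕ) : ℝ) ^ 2)⁻¹ ≤ 1 := by
    rw [sum_Ico_add' (fun j : ℕ => ((j : ℝ) ^ 2)⁻¹)]
    refine (sum_Ioc_inv_sq_le_sub one_ne_zero hn).trans ?_
    simp
  calc ∑ i ∈ Ico 1 n, 1 / ((i : ℝ) + 1) ^ 4
      ≤ 4⁻¹ * ∑ i ∈ Ico 1 n, (((i + 1 : ℕ) : ℝ) ^ 2)⁻¹ := by
        rw [mul_sum]
        exact sum_le_sum hfourth
    _ ≤ 1 / 4 := by linarith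

lemma add_one_sq_le_exp {n i : ℕ} (hi : i ∈ Ico 1 n) :
    ((i : ℝ) + 1) ^ 2 ≤ exp (n * pathAngle n i) := by
  obtain ⟨hi₁, hin⟩ := mem_Ico.mp hi
  have hn : (n : ℝ) ≠ 0 := Nat.cast_ne_zero.mpr (Nat.zero_lt_of_lt hin).ne'
  set s := sin (i * π / (2 * n))
  have hangle : pathAngle n i = 2 * arsinh s := rfl
  have hbase : 1 + (i : ℝ) / n ≤ exp (arsinh s) := by
    rw [exp_arsinh, add_comm]
    exact add_le_add (div_le_sin hin.le) (one_le_sqrt.mpr (le_add_of_nonneg_right (sq_nonneg s)))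
  have hpow : (i : ℝ) + 1 ≤ exp (arsinh s) ^ n :=
    calc (i : ℝ) + 1 = 1 + n * (i / n) := by rw [mul_div_cancel₀ _ hn, add_comm]
      _ ≤ (1 + (i : ℝ) / n) ^ n :=
        one_add_mul_le_pow ((by norm_num : (-2 : ℝ) ≤ 0).trans (by positivity)) n
      _ ≤ exp (arsinh s) ^ n := by gcongr
  calc ((i : ℝ) + 1) ^ 2 ≤ (exp (arsinh s) ^ n) ^ 2 := by gcongr
    _ = exp (n * pathAngle n i) := by
      rw [← exp_nat_mul, ← exp_nat_mul, hangle, mul_left_comm, Nat.cast_two]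

lemma three_quarters_le_prod_one_sub_exp (n : ℕ) :
    3 / 4 ≤ ∏ i ∈ Ico 1 n, (1 - exp (-2 * (n * pathAngle n i))) := by
  have hexp : ∀ i ∈ Ico 1 n, exp (-2 * (n * pathAngle n i)) ≤ 1 / ((i : ℝ) + 1) ^ 4 :=
    fun i hi => by
      calc exp (-2 * (n * pathAngle n i)) = 1 / exp (n * pathAngle n i) ^ 2 := by
            rw [← exp_nat_mul, one_div, ← exp_neg, Nat.cast_two, neg_mul]
        _ ≤ 1 / (((i : ℝ) + 1) ^ 2) ^ 2 := by
            gcongr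
            exact add_one_sq_le_exp hi
        _ = 1 / ((i : ℝ) + 1) ^ 4 := by ring
  have hsum := (sum_le_sum hexp).trans (sum_Ico_one_div_add_one_pow_four_le n)
  have hprod := one_sub_sum_le_prod_one_sub (s := Ico 1 n)
    (f := fun i => exp (-2 * (n * pathAngle n i))) (fun _ _ => (exp_pos _).le)
    fun i hi => (hexp i hi).trans (div_le_one_of_le₀ (one_le_pow₀ (by simp)) (by positivity))
  linarith

lemma mul_sum_pathAngle_add_log_le {n : ℕ} (hn : 0 < n) :
    n * ∑ i ∈ Ico 1 n, pathAngle n i + log (3 / 4) ≤ log (sinhProd n n) := by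
  have hn' : (0 : ℝ) < n := Nat.cast_pos.mpr hn
  have hpos : ∀ i ∈ Ico 1 n, 0 < n * pathAngle n i := fun i hi => mul_pos hn' (pathAngle_pos hi)
  calc n * ∑ i ∈ Ico 1 n, pathAngle n i + log (3 / 4)
      ≤ n * ∑ i ∈ Ico 1 n, pathAngle n i +
          log (∏ i ∈ Ico 1 n, (1 - exp (-2 * (n * pathAngle n i)))) := by
        gcongr
        exact three_quarters_le_prod_one_sub_exp n
    _ = ∑ i ∈ Ico 1 n, (n * pathAngle n i + log (1 - exp (-2 * (n * pathAngle n i)))) := by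
        rw [log_prod fun i hi => (sub_pos.mpr (exp_neg_two_mul_lt_one (hpos i hi))).ne', mul_sum,
          sum_add_distrib]
    _ = log (sinhProd n n) := by
        rw [log_sinhProd n hn']
        exact sum_congr rfl fun i hi => (log_two_sinh (hpos i hi)).symm

end Estimates

section Comparison

open Real

lemma le_sq_sub_of_dvd_sq {m n : ℕ} (hnm : n < m) (h : m ∣ n ^ 2) : m ≤ (m - n) ^ 2 := by
  refine Nat.le_of_dvd (pow_pos (Nat.sub_pos_of_lt hnm) 2) ?_
  obtain ⟨d, rfl⟩ := Nat.exists_eq_add_of_le hnm.le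
  rw [Nat.add_sub_cancel_left]
  have hsq : n ^ 2 + (n + d) * d = (n + d) * n + d ^ 2 := by ring
  exact (Nat.dvd_add_right (dvd_mul_right _ n)).mp (hsq ▸ dvd_add h (dvd_mul_right _ d))

lemma mul_log_five_div_two_le {m n : ℕ} (hn : 0 < n) (hnm : n < m) (h : m ∣ n ^ 2) :
    m * (log 5 / 2) ≤ (m - n) * (log (sinhProd m 1) - log (sinhProd n 1)) := by
  obtain ⟨d, rfl⟩ := Nat.exists_eq_add_of_le hnm.le
  have hgap : ((n + d : ℕ) : ℝ) ≤ d ^ 2 := by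
    have hsq := le_sq_sub_of_dvd_sq hnm h
    rw [Nat.add_sub_cancel_left] at hsq
    exact_mod_cast hsq
  have hgrowth := log_sinhProd_one_add_le hn d
  calc ((n + d : ℕ) : ℝ) * (log 5 / 2) ≤ d ^ 2 * (log 5 / 2) := by gcongr
    _ = d * (d * (log 5 / 2)) := by ring
    _ ≤ d * (log (sinhProd (n + d) 1) - log (sinhProd n 1)) := by
      gcongr
      linarith
    _ = _ := by
      rw [Nat.cast_add, add_sub_cancel_left]

lemma mul_log_sinhProd_le {k l m n : ℕ} (hl : 0 < l) (hln : l ≤ n) (harea : l * m = n ^ 2) :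
    m * log (sinhProd k l) ≤ n * log (sinhProd k n) := by
  have hl' : (0 : ℝ) < l := Nat.cast_pos.mpr hl
  have hn' : (0 : ℝ) < n := Nat.cast_pos.mpr (hl.trans_le hln)
  have harea' : (l : ℝ) * m = n ^ 2 := by exact_mod_cast harea
  calc m * log (sinhProd k l) = n ^ 2 * (log (sinhProd k l) / l) := by
        rw [← harea']
        field_simp
    _ ≤ n ^ 2 * (log (sinhProd k n) / n) :=
        mul_le_mul_of_nonneg_left
          (monotoneOn_log_sinhProd_div k hl' hn' (Nat.cast_le.mpr hln)) (sq_nonneg _)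
    _ = n * log (sinhProd k n) := by field_simp

lemma mul_log_gridTau_le {l m n : ℕ} (hl : 0 < l) (hln : l ≤ n) (hm : 0 < m)
    (harea : l * m = n ^ 2) :
    m * log (gridTau l m) ≤ m * (log (gridTau n n) - log (3 / 4)) -
      (m - n) * (log (sinhProd m 1) - log (sinhProd n 1)) := by
  have hn := hl.trans_le hln
  have hswap : log (sinhProd m n) =
      log (sinhProd n m) - log (sinhProd n 1) + log (sinhProd m 1) := by
    rw [← log_gridTau hn hm, gridTau_comm, log_gridTau hm hn, sub_add_cancel]
  have hupper : log (sinhProd n m) ≤ m * ∑ i ∈ Ico 1 n, pathAngle n i :=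
    log_sinhProd_le n (Nat.cast_pos.mpr hm)
  have hlower := mul_sum_pathAngle_add_log_le hn
  calc m * log (gridTau l m) = m * log (sinhProd m l) - m * log (sinhProd m 1) := by
        rw [gridTau_comm, log_gridTau hm hl, mul_sub]
    _ ≤ n * log (sinhProd m n) - m * log (sinhProd m 1) :=
        sub_le_sub_right (mul_log_sinhProd_le hl hln harea) _
    _ = n * log (sinhProd n m) - n * log (sinhProd n 1) - (m - n) * log (sinhProd m 1) := by
        rw [hswap]
        ring
    _ ≤ n * (m * ∑ i ∈ Ico 1 n, pathAngle n i) - n * log (sinhProd n 1) -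
          (m - n) * log (sinhProd m 1) := by gcongr
    _ = m * (n * ∑ i ∈ Ico 1 n, pathAngle n i) - n * log (sinhProd n 1) -
          (m - n) * log (sinhProd m 1) := by rw [mul_left_comm]
    _ ≤ m * (log (sinhProd n n) - log (3 / 4)) - n * log (sinhProd n 1) -
          (m - n) * log (sinhProd m 1) := by
        gcongr
        linarith
    _ = _ := by
        rw [log_gridTau hn hn]
        ring

lemma log_five_div_two_add_log_nonneg : 0 ≤ log 5 / 2 + log (3 / 4) := by
  have h : 0 ≤ log (5 * (3 / 4) ^ 2) := log_nonneg (by norm_num)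
  rw [log_mul (by norm_num) (by norm_num), log_pow] at h
  push_cast at h
  linarith

theorem gridTau_le_of_lt {l m n : ℕ} (hl : 0 < l) (hlm : l < m) (harea : l * m = n ^ 2) :
    gridTau l m ≤ gridTau n n := by
  have hln : l < n := by nlinarith
  have hnm : n < m := by nlinarith
  have hn := hl.trans hln
  have hm := hn.trans hnm
  have hupper := mul_log_gridTau_le hl hln.le hm harea
  have hgap := mul_log_five_div_two_le hn hnm (Dvd.intro_left l harea)
  have hconst := mul_nonneg (m.cast_nonneg (α := ℝ)) log_five_div_two_add_log_nonneg
  have hlog : log (gridTau l m) ≤ log (gridTau n n) :=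
    le_of_mul_le_mul_left (by linarith) (Nat.cast_pos.mpr hm : (0 : ℝ) < m)
  rwa [log_le_log_iff (Nat.cast_pos.mpr (gridTau_pos hl hm)) (Nat.cast_pos.mpr (gridTau_pos hn hn)),
    Nat.cast_le] at hlog

end Comparison

theorem square_maximal (l m n : ℕ) (hl : 0 < l) (hm : 0 < m) (hn : 0 < n)
    (harea : l * m = n ^ 2) :
    gridTau l m ≤ gridTau n n := by
  rcases lt_trichotomy l m with hlm | rfl | hml
  · exact gridTau_le_of_lt hl hlm harea
  · rw [← sq, sq_eq_sq₀ l.zero_le n.zero_le] at harea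
    rw [harea]
  · rw [gridTau_comm]
    exact gridTau_le_of_lt hm hml (mul_comm m l ▸ harea)
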